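/- Let μ and ν be probability measures on ℝ^d. If for independent samples X₁, X₂ ~ μ and Y₁, Y₂ ~ ν (all mutually independent), the three random variables ‖X₁ − X₂‖, ‖Y₁ − Y₂‖, and ‖X₁ − Y₁‖ all have the same distribution, and additionally μ and ν have densities f and g with f(x)/g(x) constant wherever both are positive, then μ = ν. -/

import Mathlib

open MeasureTheory ENNReal

lemma aux_key {d : ℕ} : ∃ K : ℝ → ℂ, Continuous K ∧
    ∀ (α β : Measure (EuclideanSpace ℝ (Fin d))) [IsProbabilityMeasure α] [IsProbabilityMeasure β],
    ∫ t, Complex.exp (-1 * (‖t‖ : ℂ) ^ 2) * (charFun α t * (starRingEnd ℂ) (charFun β t))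
      = ∫ p, K (dist p.1 p.2) ∂(α.prod β) := by
  refine ⟨fun r => (Real.pi / (1 : ℂ)) ^ ((Module.finrank ℝ (EuclideanSpace ℝ (Fin d)) : ℂ) / 2)
    * Complex.exp (Complex.I ^ 2 * (r : ℂ) ^ 2 / (4 * 1)), by fun_prop, ?_⟩
  intro α β _ _
  have h1 : ∀ t : EuclideanSpace ℝ (Fin d),
      Complex.exp (-1 * (‖t‖ : ℂ) ^ 2) * (charFun α t * (starRingEnd ℂ) (charFun β t))
      = ∫ p, Complex.exp (-1 * (‖t‖ : ℂ) ^ 2 +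
          Complex.I * ((inner ℝ (p.1 - p.2) t : ℝ) : ℂ)) ∂(α.prod β) := by
    intro t
    rw [← charFun_neg, charFun_apply, charFun_apply, ← integral_prod_mul, ← integral_const_mul]
    congr 1
    ext p
    rw [← Complex.exp_add, ← Complex.exp_add]
    congr 1
    rw [inner_sub_left, inner_neg_right]
    push_cast
    ring
  simp_rw [h1]
  have hint0 : Integrable (fun t : EuclideanSpace ℝ (Fin d) =>
      Complex.exp (-1 * (‖t‖ : ℂ) ^ 2)) := by
    have := GaussianFourier.integrable_cexp_neg_mul_sq_norm_add (b := 1) (by simp) 0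
      (0 : EuclideanSpace ℝ (Fin d))
    simpa using this
  rw [integral_integral_swap]
  · congr 1
    ext p
    rw [GaussianFourier.integral_cexp_neg_mul_sq_norm_add (b := 1) (by simp), dist_eq_norm]
  · have h2 := hint0.norm.mul_prod (integrable_const (1 : ℝ) (μ := α.prod β))
    refine Integrable.mono' h2 ?_ ?_
    · apply Continuous.aestronglyMeasurable
      unfold Function.uncurry
      fun_prop
    · refine ae_of_all _ fun q => le_of_eq ?_
      simp only [Function.uncurry, Complex.exp_add, norm_mul, mul_one]
      rw [mul_comm Complex.I, Complex.norm_exp_ofReal_mul_I, mul_one]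

/-- Necessity direction of Theorem 1: if for independent samples `X₁, X₂ ~ μ` and
`Y₁, Y₂ ~ ν` the intra-class distances `‖X₁ − X₂‖`, `‖Y₁ − Y₂‖` and the between-class
distance `‖X₁ − Y₁‖` all have the same distribution, and `μ, ν` have densities with
constant ratio wherever both are positive, then `μ = ν`. -/
theorem identical_dists_of_icd_bcd {d : ℕ}
    (μ ν : Measure (EuclideanSpace ℝ (Fin d)))
    [IsProbabilityMeasure μ] [IsProbabilityMeasure ν]
    (f g : EuclideanSpace ℝ (Fin d) → ℝ≥0∞) (hf : Measurable f) (hg : Measurable g)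
    (hμ : μ = volume.withDensity f) (hν : ν = volume.withDensity g)
    (hratio : ∃ c : ℝ≥0∞, ∀ x, 0 < f x → 0 < g x → f x = c * g x)
    (hxx_yy : (μ.prod μ).map (fun p => dist p.1 p.2) =
      (ν.prod ν).map (fun p => dist p.1 p.2))
    (hxx_xy : (μ.prod μ).map (fun p => dist p.1 p.2) =
      (μ.prod ν).map (fun p => dist p.1 p.2)) :
    μ = ν := by
  obtain ⟨K, hK, key⟩ := aux_key (d := d)
  have hmap : ∀ (α β : Measure (EuclideanSpace ℝ (Fin d))) [IsProbabilityMeasure α]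
      [IsProbabilityMeasure β], ∫ p, K (dist p.1 p.2) ∂(α.prod β)
      = ∫ r, K r ∂((α.prod β).map (fun p => dist p.1 p.2)) := by
    intro α β _ _
    rw [integral_map (by fun_prop) hK.aestronglyMeasurable]
  have hyx : ∫ p, K (dist p.1 p.2) ∂(ν.prod μ) = ∫ p, K (dist p.1 p.2) ∂(μ.prod ν) := by
    rw [← integral_prod_swap]
    simp [dist_comm]
  have hcμ : Continuous (charFun μ) := continuous_charFun
  have hcν : Continuous (charFun ν) := continuous_charFun
  have hint0 : Integrable (fun t : EuclideanSpace ℝ (Fin d) =>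
      Complex.exp (-1 * (‖t‖ : ℂ) ^ 2)) := by
    have := GaussianFourier.integrable_cexp_neg_mul_sq_norm_add (b := 1) (by simp) 0
      (0 : EuclideanSpace ℝ (Fin d))
    simpa using this
  have hI : ∀ (α β : Measure (EuclideanSpace ℝ (Fin d))) [IsProbabilityMeasure α]
      [IsProbabilityMeasure β], Integrable (fun t =>
      Complex.exp (-1 * (‖t‖ : ℂ) ^ 2) * (charFun α t * (starRingEnd ℂ) (charFun β t))) := by
    intro α β _ _
    have hα : Continuous (charFun α) := continuous_charFun
    have hβ : Continuous (charFun β) := continuous_charFun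
    refine hint0.mul_bdd (c := 1) ?_ ?_
    · exact (hα.mul (Complex.continuous_conj.comp hβ)).aestronglyMeasurable
    · refine ae_of_all _ fun t => ?_
      rw [norm_mul, RCLike.norm_conj]
      exact mul_le_one₀ (norm_charFun_le_one t) (norm_nonneg _) (norm_charFun_le_one t)
  let F : EuclideanSpace ℝ (Fin d) → ℝ := fun t =>
    Real.exp (-‖t‖ ^ 2) * Complex.normSq (charFun μ t - charFun ν t)
  have hF : ∀ t, ((F t : ℝ) : ℂ) =
      (Complex.exp (-1 * (‖t‖ : ℂ) ^ 2) * (charFun μ t * (starRingEnd ℂ) (charFun μ t))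
      - Complex.exp (-1 * (‖t‖ : ℂ) ^ 2) * (charFun μ t * (starRingEnd ℂ) (charFun ν t)))
      - (Complex.exp (-1 * (‖t‖ : ℂ) ^ 2) * (charFun ν t * (starRingEnd ℂ) (charFun μ t))
      - Complex.exp (-1 * (‖t‖ : ℂ) ^ 2) * (charFun ν t * (starRingEnd ℂ) (charFun ν t))) := by
    intro t
    simp only [F]
    push_cast
    rw [← Complex.mul_conj, map_sub, neg_one_mul]
    ring
  have hFc : Continuous F := by
    have : Continuous fun t => Complex.normSq (charFun μ t - charFun ν t) :=
      Complex.continuous_normSq.comp (hcμ.sub hcν)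
    exact Continuous.mul (by fun_prop) this
  have hFCi : Integrable (fun t => ((F t : ℝ) : ℂ)) := by
    simp_rw [hF]
    exact ((hI μ μ).sub (hI μ ν)).sub ((hI ν μ).sub (hI ν ν))
  have hFi : Integrable F := by simpa using hFCi.re
  have hF0 : ∫ t, F t = 0 := by
    have : ∫ t, ((F t : ℝ) : ℂ) = 0 := by
      simp_rw [hF]
      refine (integral_sub ((hI μ μ).sub (hI μ ν)) ((hI ν μ).sub (hI ν ν))).trans ?_
      simp only [Pi.sub_apply]
      rw [integral_sub (hI μ μ) (hI μ ν), integral_sub (hI ν μ) (hI ν ν),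
        key, key, key, key, hyx, hmap μ μ, hmap μ ν, hmap ν ν, ← hxx_yy, ← hxx_xy]
      ring
    rw [integral_complex_ofReal] at this
    exact_mod_cast this
  have hnn : 0 ≤ F := fun t => mul_nonneg (Real.exp_pos _).le (Complex.normSq_nonneg _)
  rw [integral_eq_zero_iff_of_nonneg hnn hFi] at hF0
  have hz : F = 0 := (hFc.ae_eq_iff_eq volume continuous_zero).1 hF0
  refine Measure.ext_of_charFun (funext fun t => ?_)
  have ht : F t = 0 := congrFun hz t
  rcases mul_eq_zero.1 ht with h | h
  · exact absurd h (Real.exp_pos _).ne'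
  · exact sub_eq_zero.1 (Complex.normSq_eq_zero.1 h)
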